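/- Let e be an admissible tableau supported on X(v_6). If S(2k) = B∪{4n−2,4n+1}, then S(1) = A∪{4n−1,4n,4n+2} (in particular S(1) ≠ A∪{4n−1,4n,4n+1}), so the first and last rows together form the pattern X_3. -/

import Mathlib

/-!
Write `rowCount n e i m` for the number of entries `≤ m` in row `i`. Column monotonicity (R2) says
that `rowCount` is nonincreasing in `i`. By (R1) and (R3) every row contains exactly one of `t` and
`8n+5-t`, so by (R5) each `t ≤ 4n+2` lies in exactly `k` of the `2k` rows, and the sum of
`rowCount n e i m` over all rows is `k * m` (`sum_rowCount`).

The last row has `rowCount = l` at `m = 2l` for `l ≤ 2n-1`. This is the average and also the minimum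
over the rows, so every row has exactly `l` entries `≤ 2l` (`rowCount_even`), i.e. exactly one entry
in each pair `{2l+1, 2l+2}`. Since `2l+1` occurs in some row, monotonicity puts it in row `1`.

For the four remaining values `4n-1, …, 4n+2`:
* By (R4), `rowCount` at `4n+2` is even, hence `2n` or `2n+2`. A row that contains `4n+2` has
  `rowCount` at least `2n+1` there, as the last row has `2n` at `4n+1`, so it has the value `2n+2`.
  Both kinds of rows number `k`, so the rows containing `4n+2` are exactly those with value `2n+2`;
  row `1`, whose value is the largest, is one of them.
* At `m = 4n` the average of `rowCount` is `2n` while the last row has only `2n-1`; so some row, and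
  hence row `1`, has at least `2n+1`. Thus row `1` contains `4n-1` and `4n`.
* The total `2n+2` of row `1` then excludes `4n+1`.
-/

/-- The "small set" `S(i) = { e(i,j) : 1 ≤ j ≤ 4n+2, e(i,j) ≤ 4n+2 }` of row `i`. -/
def smallSet (n : ℕ) (e : ℕ → ℕ → ℕ) (i : ℕ) : Finset ℕ :=
  ((Finset.Icc 1 (4*n+2)).filter (fun j => e i j ≤ 4*n+2)).image (e i)

/-- `A = {1,3,5,…,4n-3}`, the odd integers `≤ 4n-3`. -/
def setA (n : ℕ) : Finset ℕ := (Finset.Icc 1 (4*n-3)).filter (fun t => ¬ 2 ∣ t)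

/-- `B = {2,4,…,4n-4}`, the even integers `≤ 4n-4`. -/
def setB (n : ℕ) : Finset ℕ := (Finset.Icc 1 (4*n-4)).filter (fun t => 2 ∣ t)

/-- An admissible tableau: `e i j ∈ {1,…,8n+4}` for `1 ≤ i ≤ 2k`, `1 ≤ j ≤ 4n+2`,
subject to the conditions (R1)–(R5). -/
structure IsAdmissible (n k : ℕ) (e : ℕ → ℕ → ℕ) : Prop where
  mem_range : ∀ i j, 1 ≤ i → i ≤ 2*k → 1 ≤ j → j ≤ 4*n+2 → 1 ≤ e i j ∧ e i j ≤ 8*n+4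
  /-- (R1) rows strictly increase -/
  row_strict : ∀ i j, 1 ≤ i → i ≤ 2*k → 1 ≤ j → j < 4*n+2 → e i j < e i (j+1)
  /-- (R2) columns are nondecreasing -/
  col_mono : ∀ i j, 1 ≤ i → i < 2*k → 1 ≤ j → j ≤ 4*n+2 → e i j ≤ e (i+1) j
  /-- (R3) no row contains both `t` and `8n+5-t` -/
  no_pair : ∀ i j j', 1 ≤ i → i ≤ 2*k → 1 ≤ j → j ≤ 4*n+2 → 1 ≤ j' → j' ≤ 4*n+2 →
    e i j + e i j' ≠ 8*n+5
  /-- (R4) each row has an even number of entries `> 4n+2` -/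
  even_big : ∀ i, 1 ≤ i → i ≤ 2*k →
    Even (((Finset.Icc 1 (4*n+2)).filter (fun j => 4*n+2 < e i j)).card)
  /-- (R5) `t` and `8n+5-t` occur equally often in the tableau -/
  balanced : ∀ t, 1 ≤ t → t ≤ 8*n+4 →
    (((Finset.Icc 1 (2*k)) ×ˢ (Finset.Icc 1 (4*n+2))).filter
      (fun p => e p.1 p.2 = t)).card =
    (((Finset.Icc 1 (2*k)) ×ˢ (Finset.Icc 1 (4*n+2))).filter
      (fun p => e p.1 p.2 = 8*n+5-t)).card

/-- The first `4n+2` entries of the one-line notation of `v₆`. -/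
def bnd (n : ℕ) (j : ℕ) : ℕ :=
  if j ≤ 2*n-2 then 2*j
  else if j = 2*n-1 then 4*n-1
  else if j = 2*n then 4*n+2
  else if j = 2*n+1 then 4*n+4
  else if j = 2*n+2 then 4*n+5
  else if j = 2*n+3 then 4*n+7
  else 2*j

/-- The tableau is supported on the Schubert variety `X(v₆)`. -/
def SupportedOnXv6 (n k : ℕ) (e : ℕ → ℕ → ℕ) : Prop :=
  ∀ j, 1 ≤ j → j ≤ 4*n+2 → e (2*k) j ≤ bnd n j

/-! ### Counting entries row by row -/

/-- The number of entries of row `i` that are at most `m`. -/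
def rowCount (n : ℕ) (e : ℕ → ℕ → ℕ) (i m : ℕ) : ℕ :=
  ((Finset.Icc 1 (4*n+2)).filter (fun j => e i j ≤ m)).card

/-- The number of entries of row `i` that are equal to `t`. -/
def rowMult (n : ℕ) (e : ℕ → ℕ → ℕ) (i t : ℕ) : ℕ :=
  ((Finset.Icc 1 (4*n+2)).filter (fun j => e i j = t)).card

lemma rowCount_succ (n : ℕ) (e : ℕ → ℕ → ℕ) (i m : ℕ) :
    rowCount n e i (m+1) = rowCount n e i m + rowMult n e i (m+1) := by
  unfold rowCount rowMult
  rw [← Finset.card_union_of_disjoint, ← Finset.filter_or]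
  · congr 1
    ext j
    simp only [Finset.mem_filter, Nat.le_succ_iff]
  · rw [Finset.disjoint_filter]
    intro j _ h
    omega

section

variable {n k : ℕ} {e : ℕ → ℕ → ℕ}

lemma row_lt (he : IsAdmissible n k e) {i : ℕ} (h1 : 1 ≤ i) (h2 : i ≤ 2*k) {j j' : ℕ}
    (hj : 1 ≤ j) (hjj : j < j') (hj' : j' ≤ 4*n+2) : e i j < e i j' := by
  induction j', hjj using Nat.le_induction with
  | base => exact he.row_strict i j h1 h2 hj (by omega)
  | succ m hm ih =>
    exact (ih (by omega)).trans (he.row_strict i m h1 h2 (by omega) (by omega))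

lemma row_inj (he : IsAdmissible n k e) {i : ℕ} (h1 : 1 ≤ i) (h2 : i ≤ 2*k) {j j' : ℕ}
    (hj : 1 ≤ j) (hj2 : j ≤ 4*n+2) (hj' : 1 ≤ j') (hj'2 : j' ≤ 4*n+2)
    (h : e i j = e i j') : j = j' := by
  rcases lt_trichotomy j j' with hlt | heq | hgt
  · have := row_lt he h1 h2 hj hlt hj'2
    omega
  · exact heq
  · have := row_lt he h1 h2 hj' hgt hj2
    omega

lemma rowMult_le_one (he : IsAdmissible n k e) {i : ℕ} (h1 : 1 ≤ i) (h2 : i ≤ 2*k) (t : ℕ) :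
    rowMult n e i t ≤ 1 := by
  unfold rowMult
  rw [Finset.card_le_one]
  intro a ha b hb
  simp only [Finset.mem_filter, Finset.mem_Icc] at ha hb
  exact row_inj he h1 h2 ha.1.1 ha.1.2 hb.1.1 hb.1.2 (ha.2.trans hb.2.symm)

lemma rowMult_pos_iff {i t : ℕ} :
    0 < rowMult n e i t ↔ ∃ j, 1 ≤ j ∧ j ≤ 4*n+2 ∧ e i j = t := by
  unfold rowMult
  rw [Finset.card_pos]
  simp [Finset.Nonempty, and_assoc]

/-- Folding `t` and `8n+5-t` together maps the columns injectively into `{1,…,4n+2}`, hence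
bijectively; this is why every row meets every pair `{t, 8n+5-t}`. -/
lemma rowMult_add (he : IsAdmissible n k e) {i : ℕ} (h1 : 1 ≤ i) (h2 : i ≤ 2*k) {t : ℕ}
    (ht1 : 1 ≤ t) (ht2 : t ≤ 4*n+2) :
    rowMult n e i t + rowMult n e i (8*n+5-t) = 1 := by
  have hA := rowMult_le_one he h1 h2 t
  have hB := rowMult_le_one he h1 h2 (8*n+5-t)
  have himg : (Finset.Icc 1 (4*n+2)).image (fun j => min (e i j) (8*n+5 - e i j))
      = Finset.Icc 1 (4*n+2) := by
    apply Finset.eq_of_subset_of_card_le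
    · intro x hx
      simp only [Finset.mem_image, Finset.mem_Icc] at hx ⊢
      obtain ⟨j, hj, rfl⟩ := hx
      have := he.mem_range i j h1 h2 hj.1 hj.2
      omega
    · rw [Finset.card_image_of_injOn]
      intro a ha b hb hab
      simp only [Finset.coe_Icc, Set.mem_Icc] at ha hb
      simp only at hab
      have ra := he.mem_range i a h1 h2 ha.1 ha.2
      have rb := he.mem_range i b h1 h2 hb.1 hb.2
      have hp := he.no_pair i a b h1 h2 ha.1 ha.2 hb.1 hb.2
      exact row_inj he h1 h2 ha.1 ha.2 hb.1 hb.2 (by omega)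
  have hmem : t ∈ (Finset.Icc 1 (4*n+2)).image (fun j => min (e i j) (8*n+5 - e i j)) := by
    rw [himg, Finset.mem_Icc]
    exact ⟨ht1, ht2⟩
  simp only [Finset.mem_image, Finset.mem_Icc] at hmem
  obtain ⟨j, hj, hjt⟩ := hmem
  have rj := he.mem_range i j h1 h2 hj.1 hj.2
  have hlow : 0 < rowMult n e i t ∨ 0 < rowMult n e i (8*n+5-t) := by
    rw [rowMult_pos_iff, rowMult_pos_iff]
    rcases le_total (e i j) (8*n+5 - e i j) with h | h
    · exact Or.inl ⟨j, hj.1, hj.2, by omega⟩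
    · exact Or.inr ⟨j, hj.1, hj.2, by omega⟩
  have hup : ¬ (0 < rowMult n e i t ∧ 0 < rowMult n e i (8*n+5-t)) := by
    rw [rowMult_pos_iff, rowMult_pos_iff]
    rintro ⟨⟨a, ha1, ha2, ha⟩, ⟨b, hb1, hb2, hb⟩⟩
    exact he.no_pair i a b h1 h2 ha1 ha2 hb1 hb2 (by omega)
  omega

lemma card_pairs_eq_sum (t : ℕ) :
    (((Finset.Icc 1 (2*k)) ×ˢ (Finset.Icc 1 (4*n+2))).filter (fun p => e p.1 p.2 = t)).card
      = ∑ i ∈ Finset.Icc 1 (2*k), rowMult n e i t := by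
  unfold rowMult
  simp only [Finset.card_filter]
  rw [Finset.sum_product]

lemma sum_rowMult (he : IsAdmissible n k e) {t : ℕ} (ht1 : 1 ≤ t) (ht2 : t ≤ 4*n+2) :
    ∑ i ∈ Finset.Icc 1 (2*k), rowMult n e i t = k := by
  have hb := he.balanced t ht1 (by omega)
  rw [card_pairs_eq_sum, card_pairs_eq_sum] at hb
  have hs : ∑ i ∈ Finset.Icc 1 (2*k), (rowMult n e i t + rowMult n e i (8*n+5-t))
      = ∑ i ∈ Finset.Icc 1 (2*k), 1 := by
    apply Finset.sum_congr rfl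
    intro i hi
    rw [Finset.mem_Icc] at hi
    exact rowMult_add he hi.1 hi.2 ht1 ht2
  rw [Finset.sum_add_distrib] at hs
  simp only [Finset.sum_const, Nat.card_Icc, smul_eq_mul] at hs
  omega

lemma rowCount_zero (he : IsAdmissible n k e) {i : ℕ} (h1 : 1 ≤ i) (h2 : i ≤ 2*k) :
    rowCount n e i 0 = 0 := by
  unfold rowCount
  rw [Finset.card_eq_zero, Finset.filter_eq_empty_iff]
  intro j hj
  rw [Finset.mem_Icc] at hj
  have := he.mem_range i j h1 h2 hj.1 hj.2
  omega

lemma sum_rowCount (he : IsAdmissible n k e) {m : ℕ} (hm : m ≤ 4*n+2) :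
    ∑ i ∈ Finset.Icc 1 (2*k), rowCount n e i m = k * m := by
  induction m with
  | zero =>
    rw [mul_zero]
    apply Finset.sum_eq_zero
    intro i hi
    rw [Finset.mem_Icc] at hi
    exact rowCount_zero he hi.1 hi.2
  | succ m ih =>
    simp only [rowCount_succ, Finset.sum_add_distrib]
    rw [ih (by omega), sum_rowMult he (by omega) hm]
    ring

lemma col_le (he : IsAdmissible n k e) {i i' j : ℕ} (h1 : 1 ≤ i) (hii : i ≤ i') (h2 : i' ≤ 2*k)
    (hj1 : 1 ≤ j) (hj2 : j ≤ 4*n+2) : e i j ≤ e i' j := by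
  induction i', hii using Nat.le_induction with
  | base => exact le_rfl
  | succ m hm ih =>
    exact (ih (by omega)).trans (he.col_mono m j (by omega) (by omega) hj1 hj2)

lemma rowCount_anti (he : IsAdmissible n k e) {i i' : ℕ} (h1 : 1 ≤ i) (hii : i ≤ i')
    (h2 : i' ≤ 2*k) (m : ℕ) : rowCount n e i' m ≤ rowCount n e i m := by
  unfold rowCount
  apply Finset.card_le_card
  intro j hj
  simp only [Finset.mem_filter, Finset.mem_Icc] at hj ⊢
  exact ⟨hj.1, (col_le he h1 hii h2 hj.1.1 hj.1.2).trans hj.2⟩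

lemma even_rowCount (he : IsAdmissible n k e) {i : ℕ} (h1 : 1 ≤ i) (h2 : i ≤ 2*k) :
    Even (rowCount n e i (4*n+2)) := by
  have hb := he.even_big i h1 h2
  have hs := Finset.card_filter_add_card_filter_not (s := Finset.Icc 1 (4*n+2))
    (fun j => e i j ≤ 4*n+2)
  simp only [not_le, Nat.card_Icc] at hs
  unfold rowCount
  rw [Nat.even_iff] at hb ⊢
  omega

lemma mem_smallSet_iff {i t : ℕ} :
    t ∈ smallSet n e i ↔ t ≤ 4*n+2 ∧ 0 < rowMult n e i t := by
  rw [rowMult_pos_iff]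
  unfold smallSet
  simp only [Finset.mem_image, Finset.mem_filter, Finset.mem_Icc]
  constructor
  · rintro ⟨j, ⟨⟨hj1, hj2⟩, hj⟩, rfl⟩
    exact ⟨hj, j, hj1, hj2, rfl⟩
  · rintro ⟨ht, j, hj1, hj2, rfl⟩
    exact ⟨j, ⟨⟨hj1, hj2⟩, ht⟩, rfl⟩

/-! ### Comparing the first and the last row -/

/-- The explicit last row, in terms of multiplicities. -/
lemma rowMult_last (hlast : smallSet n e (2*k) = setB n ∪ {4*n-2, 4*n+1})
    {t : ℕ} (ht1 : 1 ≤ t) (ht2 : t ≤ 4*n+2) :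
    0 < rowMult n e (2*k) t ↔ (t ≤ 4*n-2 ∧ t % 2 = 0) ∨ t = 4*n+1 := by
  have h : t ∈ smallSet n e (2*k) ↔ t ∈ setB n ∪ {4*n-2, 4*n+1} := by rw [hlast]
  rw [mem_smallSet_iff] at h
  simp only [setB, Finset.mem_union, Finset.mem_filter, Finset.mem_Icc, Finset.mem_insert,
    Finset.mem_singleton] at h
  omega

lemma rowCount_last_even (hn : 1 ≤ n) (hk : 1 ≤ k) (he : IsAdmissible n k e)
    (hlast : smallSet n e (2*k) = setB n ∪ {4*n-2, 4*n+1}) {l : ℕ} (hl : l ≤ 2*n-1) :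
    rowCount n e (2*k) (2*l) = l := by
  induction l with
  | zero => exact rowCount_zero he (by omega) le_rfl
  | succ l ih =>
    have h0 := ih (by omega)
    have e1 := rowCount_succ n e (2*k) (2*l)
    have e2 := rowCount_succ n e (2*k) (2*l+1)
    have m1 := rowMult_last hlast (t := 2*l+1) (by omega) (by omega)
    have m2 := rowMult_last hlast (t := 2*l+1+1) (by omega) (by omega)
    have b2 := rowMult_le_one he (i := 2*k) (by omega) le_rfl (2*l+1+1)
    rw [show 2*(l+1) = 2*l+1+1 by ring]
    have m1' : ¬ 0 < rowMult n e (2*k) (2*l+1) := by rw [m1]; omega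
    have m2' : 0 < rowMult n e (2*k) (2*l+1+1) := by rw [m2]; omega
    omega

/-- The last row attains the minimum of `rowCount`, and at `2l` the minimum equals the average, so
`rowCount` is constant there. -/
lemma rowCount_even (hn : 1 ≤ n) (hk : 1 ≤ k) (he : IsAdmissible n k e)
    (hlast : smallSet n e (2*k) = setB n ∪ {4*n-2, 4*n+1}) {l : ℕ} (hl : l ≤ 2*n-1)
    {i : ℕ} (h1 : 1 ≤ i) (h2 : i ≤ 2*k) :
    rowCount n e i (2*l) = l := by
  have hle : ∀ i ∈ Finset.Icc 1 (2*k), l ≤ rowCount n e i (2*l) := by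
    intro i hi
    rw [Finset.mem_Icc] at hi
    have := rowCount_anti he hi.1 hi.2 le_rfl (2*l)
    rwa [rowCount_last_even hn hk he hlast hl] at this
  have hsum : ∑ i ∈ Finset.Icc 1 (2*k), l = ∑ i ∈ Finset.Icc 1 (2*k), rowCount n e i (2*l) := by
    rw [sum_rowCount he (by omega)]
    simp only [Finset.sum_const, Nat.card_Icc, smul_eq_mul, Nat.add_sub_cancel]
    ring
  exact ((Finset.sum_eq_sum_iff_of_le hle).1 hsum i (Finset.mem_Icc.2 ⟨h1, h2⟩)).symm

/-- Row `1` contains the odd and omits the even member of each pair `{2l+1, 2l+2}`. -/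
lemma rowMult_first (hn : 1 ≤ n) (hk : 1 ≤ k) (he : IsAdmissible n k e)
    (hlast : smallSet n e (2*k) = setB n ∪ {4*n-2, 4*n+1}) {l : ℕ} (hl : l + 1 ≤ 2*n-1) :
    rowMult n e 1 (2*l+1) = 1 ∧ rowMult n e 1 (2*l+2) = 0 := by
  have hs := sum_rowMult he (t := 2*l+1) (by omega) (by omega)
  obtain ⟨i, hi, hne⟩ := Finset.exists_ne_zero_of_sum_ne_zero (hs.trans_ne (by omega))
  rw [Finset.mem_Icc] at hi
  have c0 := rowCount_even hn hk he hlast (l := l) (by omega) hi.1 hi.2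
  have d0 := rowCount_even hn hk he hlast (l := l) (by omega) le_rfl (by omega)
  have d2 := rowCount_even hn hk he hlast (l := l+1) hl le_rfl (by omega)
  have c1 := rowCount_succ n e i (2*l)
  have d1 := rowCount_succ n e 1 (2*l)
  have d1' := rowCount_succ n e 1 (2*l+1)
  have ha := rowCount_anti he le_rfl hi.1 hi.2 (2*l+1)
  have hb := rowMult_le_one he le_rfl (by omega : 1 ≤ 2*k) (2*l+1)
  rw [show 2*(l+1) = 2*l+1+1 by ring] at d2
  rw [show 2*l+2 = 2*l+1+1 by ring]
  omega

/-- Row `1` contains `4n-1`, `4n`, `4n+2` and omits `4n+1`. -/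
lemma rowMult_first_top (hn : 1 ≤ n) (hk : 1 ≤ k) (he : IsAdmissible n k e)
    (hlast : smallSet n e (2*k) = setB n ∪ {4*n-2, 4*n+1}) :
    rowMult n e 1 (4*n-1) = 1 ∧ rowMult n e 1 (4*n) = 1 ∧ rowMult n e 1 (4*n+1) = 0 ∧
      rowMult n e 1 (4*n+2) = 1 := by
  have step : ∀ i, rowCount n e i (4*n-1) = rowCount n e i (4*n-2) + rowMult n e i (4*n-1) ∧
      rowCount n e i (4*n) = rowCount n e i (4*n-1) + rowMult n e i (4*n) ∧
      rowCount n e i (4*n+1) = rowCount n e i (4*n) + rowMult n e i (4*n+1) ∧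
      rowCount n e i (4*n+2) = rowCount n e i (4*n+1) + rowMult n e i (4*n+2) := by
    intro i
    have s1 := rowCount_succ n e i (4*n-2)
    have s2 := rowCount_succ n e i (4*n-1)
    rw [show 4*n-2+1 = 4*n-1 by omega] at s1
    rw [show 4*n-1+1 = 4*n by omega] at s2
    exact ⟨s1, s2, rowCount_succ n e i (4*n), rowCount_succ n e i (4*n+1)⟩
  have base : ∀ i, 1 ≤ i → i ≤ 2*k → rowCount n e i (4*n-2) = 2*n-1 := by
    intro i h1 h2
    have := rowCount_even hn hk he hlast (l := 2*n-1) le_rfl h1 h2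
    rwa [show 2*(2*n-1) = 4*n-2 by omega] at this
  -- The last row contains `4n+1` and neither `4n-1` nor `4n`.
  have l1 : ¬ 0 < rowMult n e (2*k) (4*n-1) := by
    rw [rowMult_last hlast (by omega) (by omega)]; omega
  have l2 : ¬ 0 < rowMult n e (2*k) (4*n) := by
    rw [rowMult_last hlast (by omega) (by omega)]; omega
  have l3 : 0 < rowMult n e (2*k) (4*n+1) := by
    rw [rowMult_last hlast (by omega) (by omega)]; omega
  have lb := base (2*k) (by omega) le_rfl
  obtain ⟨ls1, ls2, ls3, ls4⟩ := step (2*k)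
  -- Some row has more entries `≤ 4n` than the average `2n`.
  have hex : ∃ i ∈ Finset.Icc 1 (2*k), 2*n < rowCount n e i (4*n) := by
    by_contra! hcon
    have hlt : ∑ i ∈ Finset.Icc 1 (2*k), rowCount n e i (4*n) < ∑ i ∈ Finset.Icc 1 (2*k), 2*n :=
      Finset.sum_lt_sum hcon ⟨2*k, Finset.mem_Icc.2 ⟨by omega, le_rfl⟩, by omega⟩
    rw [sum_rowCount he (by omega)] at hlt
    simp only [Finset.sum_const, Nat.card_Icc, smul_eq_mul, Nat.add_sub_cancel] at hlt
    nlinarith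
  obtain ⟨i, hi, hilt⟩ := hex
  rw [Finset.mem_Icc] at hi
  have ha := rowCount_anti he le_rfl hi.1 hi.2 (4*n)
  -- Compared row by row, `2n + 2 * [4n+2 ∈ row] ≤ rowCount`, and both sides have equal sums.
  have hle : ∀ i ∈ Finset.Icc 1 (2*k),
      2*n + 2 * rowMult n e i (4*n+2) ≤ rowCount n e i (4*n+2) := by
    intro i hi
    rw [Finset.mem_Icc] at hi
    have h1 := rowCount_anti he hi.1 hi.2 le_rfl (4*n+1)
    have h2 := rowMult_le_one he hi.1 hi.2 (4*n+2)
    have h3 := even_rowCount he hi.1 hi.2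
    have h4 := (step i).2.2.2
    rw [Nat.even_iff] at h3
    omega
  have hsum : ∑ i ∈ Finset.Icc 1 (2*k), (2*n + 2 * rowMult n e i (4*n+2))
      = ∑ i ∈ Finset.Icc 1 (2*k), rowCount n e i (4*n+2) := by
    rw [sum_rowCount he le_rfl, Finset.sum_add_distrib, Finset.sum_const,
      ← Finset.mul_sum, sum_rowMult he (by omega) le_rfl]
    simp only [Nat.card_Icc, smul_eq_mul, Nat.add_sub_cancel]
    ring
  have heq := (Finset.sum_eq_sum_iff_of_le hle).1 hsum 1 (Finset.mem_Icc.2 ⟨le_rfl, by omega⟩)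
  obtain ⟨f1, f2, f3, f4⟩ := step 1
  have fb := base 1 le_rfl (by omega)
  have b1 := rowMult_le_one he le_rfl (by omega : 1 ≤ 2*k) (4*n-1)
  have b2 := rowMult_le_one he le_rfl (by omega : 1 ≤ 2*k) (4*n)
  have b3 := rowMult_le_one he le_rfl (by omega : 1 ≤ 2*k) (4*n+1)
  have b4 := rowMult_le_one he le_rfl (by omega : 1 ≤ 2*k) (4*n+2)
  omega

end

/-- case (iii), `S(2k) = B ∪ {4n-2, 4n+1}` forces
`S(1) = A ∪ {4n-1, 4n, 4n+2}` (pattern `X₃`); in particular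
`S(1) ≠ A ∪ {4n-1, 4n, 4n+1}`. -/
theorem stmt_7 (n k : ℕ) (hn : 1 ≤ n) (hk : 1 ≤ k) (e : ℕ → ℕ → ℕ)
    (he : IsAdmissible n k e) (hsupp : SupportedOnXv6 n k e)
    (hlast : smallSet n e (2*k) = setB n ∪ {4*n-2, 4*n+1}) :
    smallSet n e 1 = setA n ∪ {4*n-1, 4*n, 4*n+2} ∧
    smallSet n e 1 ≠ setA n ∪ {4*n-1, 4*n, 4*n+1} := by
  obtain ⟨t1, t2, t3, t4⟩ := rowMult_first_top hn hk he hlast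
  constructor
  · ext t
    rw [mem_smallSet_iff]
    simp only [setA, Finset.mem_union, Finset.mem_filter, Finset.mem_Icc, Finset.mem_insert,
      Finset.mem_singleton]
    rcases Nat.eq_zero_or_pos t with rfl | ht
    · have h0 : ¬ 0 < rowMult n e 1 0 := by
        rw [rowMult_pos_iff]
        rintro ⟨j, hj1, hj2, hj⟩
        have := he.mem_range 1 j le_rfl (by omega) hj1 hj2
        omega
      omega
    by_cases hs : t ≤ 4*n-2
    · obtain ⟨l, hl⟩ : ∃ l, t = 2*l+1 ∨ t = 2*l+2 := ⟨(t-1)/2, by omega⟩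
      have hf := rowMult_first hn hk he hlast (l := l) (by omega)
      rcases hl with rfl | rfl
      · omega
      · omega
    · by_cases hbig : t ≤ 4*n+2
      · obtain rfl | rfl | rfl | rfl : t = 4*n-1 ∨ t = 4*n ∨ t = 4*n+1 ∨ t = 4*n+2 := by omega
        all_goals omega
      · omega
  · intro h
    have hmem : 4*n+1 ∈ smallSet n e 1 := by
      rw [h]
      simp
    rw [mem_smallSet_iff] at hmem
    omega
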